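/- arXiv:2604.05245 — 2 statements merged into one kernel-verified Lean document; each statement's English description precedes it below -/
import Mathlib

section
/- Assume 0 < γ ≤ 1 (and γ < p), let u be a local minimizer of J on Ω, and let Ω' ⊆ Ω with dist(Ω', ∂Ω) > 0. Assume the growth property: there exist ρ₀ > 0 and C₂ > 0 such that |u(x)| ≤ C₂ · dist(x, Γ_0(u))^{1+τ} for every x ∈ Ω with dist(x, Γ_0(u)) < ρ₀. Then there exists κ ∈ (0,1), depending only on N, p, γ, λ₊, λ₋ and C₂, such that for every z ∈ Γ_0(u) ∩ Ω' and every 0 < r < min(ρ₀, dist(Ω', ∂Ω)) there exists y ∈ B_r(z) with B_{κr}(y) ⊆ B_r(z) \ Γ_0(u); that is, Γ_0(u) is locally porous in Ω with porosity constant κ. -/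
open MeasureTheory Metric Set
open scoped InnerProductSpace

/-- The Alt–Phillips potential `F_γ(t) = λ₊ (t₊)^γ + λ₋ (t₋)^γ`. -/
noncomputable def Fgam (γ lp lm : ℝ) (t : ℝ) : ℝ :=
  lp * (max t 0) ^ γ + lm * (max (-t) 0) ^ γ

/-- `u` is a `C¹(Ω)` function with `∫_Ω ‖∇u‖^p < ∞` which is a local minimizer of the
functional with density `‖∇v‖^p/p + F(v)`, with respect to Lipschitz competitors on
balls compactly contained in `Ω` agreeing with `u` on the boundary sphere. -/
def APLocMin (N : ℕ) (p : ℝ) (F : ℝ → ℝ) (Ω : Set (EuclideanSpace ℝ (Fin N)))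
    (u : EuclideanSpace ℝ (Fin N) → ℝ) : Prop :=
  (∀ x ∈ Ω, DifferentiableAt ℝ u x) ∧
  ContinuousOn (fun x => gradient u x) Ω ∧
  IntegrableOn (fun x => ‖gradient u x‖ ^ p) Ω volume ∧
  ∀ (z : EuclideanSpace ℝ (Fin N)) (r : ℝ), 0 < r → closure (Metric.ball z r) ⊆ Ω →
    ∀ (v : EuclideanSpace ℝ (Fin N) → ℝ) (K : NNReal),
      LipschitzOnWith K v (closure (Metric.ball z r)) →
      Set.EqOn v u (Metric.sphere z r) →
      (∫ x in Metric.ball z r, (‖gradient u x‖ ^ p / p + F (u x))) ≤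
        ∫ x in Metric.ball z r, (‖gradient v x‖ ^ p / p + F (v x))

/-- The free boundary `Γ(u) = (∂{u>0} ∪ ∂{u<0}) ∩ Ω`. -/
def apFB (N : ℕ) (Ω : Set (EuclideanSpace ℝ (Fin N)))
    (u : EuclideanSpace ℝ (Fin N) → ℝ) : Set (EuclideanSpace ℝ (Fin N)) :=
  (frontier {x ∈ Ω | 0 < u x} ∪ frontier {x ∈ Ω | u x < 0}) ∩ Ω

/-- The zero-gradient part of the free boundary `Γ₀(u) = Γ(u) ∩ {∇u = 0}`. -/
def apFB0 (N : ℕ) (Ω : Set (EuclideanSpace ℝ (Fin N)))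
    (u : EuclideanSpace ℝ (Fin N) → ℝ) : Set (EuclideanSpace ℝ (Fin N)) :=
  apFB N Ω u ∩ {x | gradient u x = 0}

/-- extension by zero -/
lemma ap_ext {E : Type*} [NormedAddCommGroup E] [NormedSpace ℝ E] (z : E) (R : ℝ) (f : E → ℝ)
    (K : NNReal) (hf : LipschitzOnWith K f (closedBall z R)) (h0 : ∀ x ∈ sphere z R, f x = 0) :
    LipschitzWith K (indicator (closedBall z R) f) := by
  have key : ∀ x ∈ closedBall z R, ∀ y ∉ closedBall z R, |f x| ≤ K * dist x y := by
    intro x hx y hy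
    have hc : ContinuousOn (fun t : E => dist t z) (segment ℝ x y) := by fun_prop
    have hpc : IsPreconnected (segment ℝ x y) := (convex_segment x y).isPreconnected
    have := hpc.intermediate_value (left_mem_segment ℝ x y) (right_mem_segment ℝ x y) hc
    rw [mem_closedBall] at hx
    have hy' : R < dist y z := by simpa using hy
    obtain ⟨q, hq, hqR⟩ := this ⟨hx, hy'.le⟩
    have hfq : f q = 0 := h0 q (mem_sphere.2 hqR)
    have h1 := hf.dist_le_mul x (by simpa using hx) q (by simpa using hqR.le)
    rw [Real.dist_eq, hfq, sub_zero] at h1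
    refine h1.trans ?_
    gcongr
    have := dist_add_dist_of_mem_segment hq
    have := dist_nonneg (x := q) (y := y)
    linarith
  refine LipschitzWith.of_dist_le_mul fun x y => ?_
  by_cases hx : x ∈ closedBall z R <;> by_cases hy : y ∈ closedBall z R
  · simp only [indicator_of_mem hx, indicator_of_mem hy]
    exact hf.dist_le_mul x hx y hy
  · simp only [indicator_of_mem hx, indicator_of_notMem hy, Real.dist_eq, sub_zero]
    exact key x hx y hy
  · simp only [indicator_of_notMem hx, indicator_of_mem hy, Real.dist_eq, zero_sub, abs_neg]
    rw [dist_comm]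
    exact key y hy x hx
  · simp only [indicator_of_notMem hx, indicator_of_notMem hy, dist_self]
    positivity

lemma ap_div (N : ℕ) (z : EuclideanSpace ℝ (Fin N)) (φ : EuclideanSpace ℝ (Fin N) → ℝ)
    (K : NNReal) (hφ : LipschitzWith K φ) (hc : HasCompactSupport φ) :
    Integrable (fun x => fderiv ℝ φ x (x - z)) ∧
      ∫ x, fderiv ℝ φ x (x - z) = - (N * ∫ x, φ x) := by
  let e : Fin N → EuclideanSpace ℝ (Fin N) := fun i => EuclideanSpace.single i (1:ℝ)
  have hcoordL : ∀ i, LipschitzWith 1 (fun x : EuclideanSpace ℝ (Fin N) => (x - z) i) := by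
    intro i
    refine LipschitzWith.of_dist_le_mul fun x y => ?_
    rw [Real.dist_eq, dist_eq_norm, NNReal.coe_one, one_mul]
    have := PiLp.norm_apply_le (x - y) i
    simpa using this
  have hld : ∀ i x, lineDeriv ℝ (fun x : EuclideanSpace ℝ (Fin N) => (x - z) i) x (e i) = 1 := by
    intro i x
    have : HasFDerivAt (fun x : EuclideanSpace ℝ (Fin N) => (x - z) i)
        (EuclideanSpace.proj i : EuclideanSpace ℝ (Fin N) →L[ℝ] ℝ) x := by
      have h := (EuclideanSpace.proj i : EuclideanSpace ℝ (Fin N) →L[ℝ] ℝ).hasFDerivAt (x := x)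
      have h2 := h.sub_const (z i)
      refine h2.congr_of_eventuallyEq (Filter.Eventually.of_forall fun y => ?_)
      simp
    rw [(this.hasLineDerivAt (e i)).lineDeriv]
    simp [e]
  have hI : ∀ i, ∫ x, fderiv ℝ φ x (- e i) * (x - z) i = ∫ x, φ x := by
    intro i
    have := LipschitzWith.integral_lineDeriv_mul_eq (μ := volume) (hcoordL i) hφ hc (e i)
    simp only [hld, one_mul] at this
    rw [this]
    refine integral_congr_ae ?_
    filter_upwards [hφ.ae_differentiableAt (μ := volume)] with x hx
    rw [hx.lineDeriv_eq_fderiv]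
  have hint : ∀ i ∈ (Finset.univ : Finset (Fin N)),
      Integrable (fun x => fderiv ℝ φ x (- e i) * (x - z) i) := by
    intro i _
    have hcs : IsCompact (tsupport φ) := hc
    rw [← integrableOn_iff_integrable_of_support_subset (s := tsupport φ)]
    · obtain ⟨C, hC⟩ := hcs.exists_bound_of_continuousOn
        (f := fun x : EuclideanSpace ℝ (Fin N) => (x - z) i) (hcoordL i).continuous.continuousOn
      refine Measure.integrableOn_of_bounded (M := K * ‖e i‖ * C) hcs.measure_lt_top.ne ?_ ?_
      · exact ((measurable_fderiv_apply_const ℝ φ _).mul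
          (hcoordL i).continuous.measurable).aestronglyMeasurable
      · filter_upwards [ae_restrict_mem hcs.measurableSet] with x hx
        rw [norm_mul]
        refine mul_le_mul ?_ (hC x hx) (norm_nonneg _) (by positivity)
        refine ((fderiv ℝ φ x).le_opNorm _).trans ?_
        rw [norm_neg]
        gcongr
        exact norm_fderiv_le_of_lipschitz ℝ hφ
    · intro x hx
      by_contra hx'
      have : fderiv ℝ φ x = 0 := by
        by_contra h
        exact hx' (support_fderiv_subset ℝ h)
      simp [this] at hx
  have hsum : ∀ x, fderiv ℝ φ x (x - z) = - ∑ i, fderiv ℝ φ x (- e i) * (x - z) i := by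
    intro x
    have hx : x - z = ∑ i, (x - z) i • e i := by
      ext j
      simp [e, Finset.sum_apply, Pi.single_apply]
    conv_lhs => rw [hx]
    rw [map_sum, ← Finset.sum_neg_distrib]
    refine Finset.sum_congr rfl fun i _ => ?_
    rw [map_smul, map_neg, smul_eq_mul]; ring
  simp_rw [hsum]
  refine ⟨(integrable_finsetSum _ hint).neg, ?_⟩
  rw [integral_neg, integral_finsetSum _ hint]
  rw [Finset.sum_congr rfl fun i _ => hI i]
  simp

lemma ap_young {E : Type*} [NormedAddCommGroup E] [InnerProductSpace ℝ E] (p q : ℝ)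
    (hpq : p.HolderConjugate q) (a ξ : E) :
    ‖‖ξ‖ ^ (q - 2) • ξ‖ ^ p / p + inner ℝ (a - ‖ξ‖ ^ (q - 2) • ξ) ξ ≤ ‖a‖ ^ p / p := by
  have hq1 : 1 < q := hpq.symm.lt
  have hn : ‖‖ξ‖ ^ (q - 2) • ξ‖ = ‖ξ‖ ^ (q - 1) := by
    rw [norm_smul, Real.norm_of_nonneg (by positivity)]
    rw [← Real.rpow_add_one' (by positivity) (by linarith)]
    ring_nf
  have hnn : ‖ξ‖ ^ (q-2) * (‖ξ‖ * ‖ξ‖) = ‖ξ‖ ^ q := by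
    rw [← mul_assoc, ← Real.rpow_add_one' (by positivity) (by linarith),
      ← Real.rpow_add_one' (by positivity) (by linarith)]
    ring_nf
  have hy := Real.young_inequality_of_nonneg (norm_nonneg a) (norm_nonneg ξ) hpq
  have hcs := real_inner_le_norm a ξ
  rw [hn, ← Real.rpow_mul (norm_nonneg _), hpq.symm.sub_one_mul_conj, inner_sub_left,
    real_inner_smul_left, real_inner_self_eq_norm_mul_norm, hnn]
  have h1 := hpq.inv_add_inv_eq_one
  have : ‖ξ‖ ^ q / p = ‖ξ‖ ^ q - ‖ξ‖ ^ q / q := by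
    rw [div_eq_mul_inv, div_eq_mul_inv, eq_sub_iff_add_eq, ← mul_add, h1, mul_one]
  linarith

lemma ap_concave (γ M a b : ℝ) (hγ0 : 0 < γ) (hγ1 : γ ≤ 1) (hb : 0 ≤ b) (hba : b < a)
    (haM : a ≤ M) : γ * M ^ (γ - 1) * (a - b) ≤ a ^ γ - b ^ γ := by
  have ha : 0 < a := hb.trans_lt hba
  have h1 := rpow_one_add_le_one_add_mul_self (s := b / a - 1)
    (by have : 0 ≤ b / a := by positivity
        linarith) hγ0.le hγ1
  rw [add_sub_cancel, Real.div_rpow hb ha.le, div_le_iff₀ (by positivity)] at h1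
  have h2 : M ^ (γ - 1) ≤ a ^ (γ - 1) := Real.rpow_le_rpow_of_nonpos ha haM (by linarith)
  have h3 : a ^ γ = a ^ (γ - 1) * a := by
    rw [← Real.rpow_add_one ha.ne']; ring_nf
  have h4 : γ * M ^ (γ - 1) * (a - b) ≤ γ * a ^ (γ - 1) * (a - b) := by
    have : 0 ≤ a - b := by linarith
    gcongr
  have h5 : (1 + γ * (b / a - 1)) * a ^ γ = a ^ γ - γ * a ^ (γ - 1) * (a - b) := by
    rw [h3]; field_simp; ring
  linarith

lemma ap_gradw {E : Type*} [NormedAddCommGroup E] [InnerProductSpace ℝ E] [CompleteSpace E]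
    (q c : ℝ) (hc : 0 < c) (hq : 1 < q) (z x : E) :
    HasGradientAt (fun x : E => (c * q)⁻¹ * ‖c • (x - z)‖ ^ q)
      (‖c • (x - z)‖ ^ (q - 2) • (c • (x - z))) x := by
  rw [hasGradientAt_iff_hasFDerivAt]
  have h1 : HasFDerivAt (fun x : E => c • (x - z)) (c • ContinuousLinearMap.id ℝ E) x :=
    ((hasFDerivAt_id x).sub_const z).const_smul c
  have h2 := ((hasFDerivAt_norm_rpow (c • (x - z)) hq).comp x h1).const_mul (c * q)⁻¹
  refine h2.congr_fderiv ?_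
  ext y
  simp only [smul_apply, ContinuousLinearMap.comp_apply,
    InnerProductSpace.toDual_apply_apply, innerSL_apply_apply, ContinuousLinearMap.id_apply,
    inner_smul_left, inner_smul_right, smul_eq_mul, conj_trivial]
  field_simp

lemma ap_lip {E : Type*} [NormedAddCommGroup E] [NormedSpace ℝ E] [ProperSpace E]
    (f : E → ℝ) (z : E) (R : ℝ) (hd : ∀ x ∈ closedBall z R, DifferentiableAt ℝ f x)
    (hc : ContinuousOn (fderiv ℝ f) (closedBall z R)) :
    ∃ K, LipschitzOnWith K f (closedBall z R) := by
  obtain ⟨C, hC⟩ := (isCompact_closedBall z R).exists_bound_of_continuousOn hc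
  refine ⟨C.toNNReal, (convex_closedBall z R).lipschitzOnWith_of_nnnorm_fderiv_le hd ?_⟩
  intro x hx
  exact NNReal.coe_le_coe.1 ((hC x hx).trans (Real.le_coe_toNNReal C))

lemma ap_fgam_cont (γ lp lm : ℝ) (hγ0 : 0 < γ) : Continuous (Fgam γ lp lm) := by
  unfold Fgam
  exact (continuous_const.mul ((continuous_id.max continuous_const).rpow_const
    fun _ => Or.inr hγ0.le)).add (continuous_const.mul
    ((continuous_neg.max continuous_const).rpow_const fun _ => Or.inr hγ0.le))

lemma ap_fgam_pos (γ lp lm t : ℝ) (hγ0 : 0 < γ) (ht : 0 ≤ t) : Fgam γ lp lm t = lp * t ^ γ := by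
  unfold Fgam
  rw [max_eq_left ht, max_eq_right (by linarith), Real.zero_rpow hγ0.ne']; ring

lemma ap_norm_grad {E : Type*} [NormedAddCommGroup E] [InnerProductSpace ℝ E] [CompleteSpace E]
    (f : E → ℝ) (x : E) : ‖gradient f x‖ = ‖fderiv ℝ f x‖ := by
  rw [← toDual_gradient, LinearIsometryEquiv.norm_map]

lemma ap_core (N : ℕ) (p q γ lp lm : ℝ) (hpq : p.HolderConjugate q)
    (hγ0 : 0 < γ) (hγ1 : γ ≤ 1) (hlp : 0 < lp)
    (Ω : Set (EuclideanSpace ℝ (Fin N))) (u : EuclideanSpace ℝ (Fin N) → ℝ)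
    (hu : APLocMin N p (Fgam γ lp lm) Ω u) (z : EuclideanSpace ℝ (Fin N)) (R : ℝ) (hR : 0 < R)
    (hsub : closedBall z R ⊆ Ω) (M c : ℝ) (hc : 0 < c)
    (huM : ∀ x ∈ closedBall z R, u x ≤ M) (hMw : M ≤ (c * q)⁻¹ * (c * R) ^ q)
    (hcm : c * N < lp * (γ * M ^ (γ - 1))) : u z ≤ 0 := by
  obtain ⟨hud, hugc, hui, hmin⟩ := hu
  have hq1 : 1 < q := hpq.symm.lt
  have hp1 : 1 < p := hpq.lt
  obtain ⟨w, hw⟩ : ∃ w : EuclideanSpace ℝ (Fin N) → ℝ,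
    w = fun x => (c * q)⁻¹ * ‖c • (x - z)‖ ^ q := ⟨_, rfl⟩
  have hw0 : ∀ x, 0 ≤ w x := fun x => by rw [hw]; positivity
  have hwz : w z = 0 := by simp [hw, Real.zero_rpow (by linarith : q ≠ 0)]
  have hwg : ∀ x, HasGradientAt w (‖c • (x - z)‖ ^ (q - 2) • (c • (x - z))) x := fun x => by
    rw [hw]; exact ap_gradw q c hc hq1 z x
  have hwC : ContDiff ℝ 1 w := by
    rw [hw]
    have h1 : ContDiff ℝ 1 (fun x : EuclideanSpace ℝ (Fin N) => c • (x - z)) := by fun_prop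
    exact contDiff_const.mul ((contDiff_norm_rpow hq1).comp h1)
  obtain ⟨K2, hK2⟩ := ap_lip w z R (fun x _ => (hwg x).differentiableAt)
    (hwC.continuous_fderiv (by norm_num)).continuousOn
  obtain ⟨K1, hK1⟩ := ap_lip u z R (fun x hx => hud x (hsub hx)) (by
    rw [← toDual_comp_gradient]
    exact (LinearIsometryEquiv.continuous _).comp_continuousOn (hugc.mono hsub))
  obtain ⟨f, hf⟩ : ∃ f : EuclideanSpace ℝ (Fin N) → ℝ, f = fun x => max (u x - w x) 0 := ⟨_, rfl⟩
  have hfL : LipschitzOnWith (K1 + K2) f (closedBall z R) := by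
    rw [hf]
    refine LipschitzOnWith.of_dist_le_mul fun x hx y hy => ?_
    have h1 := hK1.dist_le_mul x hx y hy
    have h2 := hK2.dist_le_mul x hx y hy
    rw [Real.dist_eq] at *
    refine (abs_max_sub_max_le_abs _ _ _).trans ?_
    rw [NNReal.coe_add, add_mul]
    calc |u x - w x - (u y - w y)| = |(u x - u y) - (w x - w y)| := by ring_nf
      _ ≤ |u x - u y| + |w x - w y| := abs_sub _ _
      _ ≤ _ := add_le_add h1 h2
  obtain ⟨φ, hφ⟩ : ∃ φ : EuclideanSpace ℝ (Fin N) → ℝ,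
    φ = indicator (closedBall z R) f := ⟨_, rfl⟩
  have hf0 : ∀ x, 0 ≤ f x := fun x => by rw [hf]; exact le_max_right _ _
  have hφ0 : ∀ x, 0 ≤ φ x := fun x => by
    rw [hφ]; exact indicator_nonneg (fun x _ => hf0 x) x
  have hfS : ∀ x ∈ sphere z R, f x = 0 := by
    intro x hx
    have hx1 : ‖c • (x - z)‖ = c * R := by
      rw [norm_smul, Real.norm_of_nonneg hc.le, ← dist_eq_norm, mem_sphere.1 hx]
    have := huM x (sphere_subset_closedBall hx)
    rw [hf]
    apply max_eq_right
    rw [hw]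
    simp only [hx1]
    linarith
  have hφL : LipschitzWith (K1 + K2) φ := by rw [hφ]; exact ap_ext z R f _ hfL hfS
  have hφB : ∀ x, x ∉ ball z R → φ x = 0 := by
    intro x hx
    by_cases hx2 : x ∈ closedBall z R
    · rw [hφ, indicator_of_mem hx2]
      apply hfS
      rw [mem_sphere]
      exact le_antisymm hx2 (by simpa using hx)
    · rw [hφ, indicator_of_notMem hx2]
  have hφf : ∀ x ∈ closedBall z R, φ x = f x := fun x hx => by rw [hφ, indicator_of_mem hx]
  have hφc : HasCompactSupport φ :=
    HasCompactSupport.intro (isCompact_closedBall z R)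
      (fun x hx => hφB x fun h => hx (ball_subset_closedBall h))
  have hφd : ∀ x, φ x = 0 → fderiv ℝ φ x = 0 := by
    intro x hx
    apply IsLocalMin.fderiv_eq_zero
    exact Filter.Eventually.of_forall fun y => by rw [hx]; exact hφ0 y
  obtain ⟨hDi, hD⟩ := ap_div N z φ _ hφL hφc
  have hφi : Integrable φ := hφL.continuous.integrable_of_hasCompactSupport hφc
  obtain ⟨v, hv⟩ : ∃ v : EuclideanSpace ℝ (Fin N) → ℝ, v = fun x => u x - φ x := ⟨_, rfl⟩
  have hvL : LipschitzOnWith (K1 + (K1 + K2)) v (closedBall z R) := by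
    rw [hv]
    refine LipschitzOnWith.of_dist_le_mul fun x hx y hy => ?_
    have h1 := hK1.dist_le_mul x hx y hy
    have h2 := hφL.dist_le_mul x y
    rw [Real.dist_eq] at *
    rw [NNReal.coe_add, add_mul]
    calc |u x - φ x - (u y - φ y)| = |(u x - u y) - (φ x - φ y)| := by ring_nf
      _ ≤ |u x - u y| + |φ x - φ y| := abs_sub _ _
      _ ≤ _ := add_le_add h1 h2
  have hcl : closure (ball z R) = closedBall z R := closure_ball z hR.ne'
  have hJ := hmin z R hR (by rwa [hcl]) v _ (by rw [hcl]; exact hvL) (by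
    intro x hx
    have : x ∉ ball z R := fun h => by
      rw [mem_sphere] at hx; rw [mem_ball, hx] at h; exact lt_irrefl _ h
    rw [hv]
    simp only [hφB x this, sub_zero])
  -- pointwise inequality
  have hpt : ∀ x ∈ ball z R, DifferentiableAt ℝ φ x →
      ‖gradient v x‖ ^ p / p + Fgam γ lp lm (v x) +
        (c * fderiv ℝ φ x (x - z) + lp * (γ * M ^ (γ - 1)) * φ x) ≤
      ‖gradient u x‖ ^ p / p + Fgam γ lp lm (u x) := by
    intro x hx hdx
    have hxc := ball_subset_closedBall hx
    have hux := hud x (hsub hxc)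
    rcases le_or_gt (u x) (w x) with h | h
    · have h0 : φ x = 0 := by
        rw [hφf x hxc, hf]; exact max_eq_right (by linarith)
      have hg : gradient v x = gradient u x := by
        unfold gradient
        congr 1
        rw [hv, fderiv_fun_sub hux hdx, hφd x h0, sub_zero]
      have hvx : v x = u x := by rw [hv]; simp [h0]
      rw [hg, hvx, hφd x h0, h0]
      simp
    · have huc : ContinuousAt u x := hux.continuousAt
      have hwc : ContinuousAt w x := (hwg x).differentiableAt.continuousAt
      have hev : ∀ᶠ y in nhds x, φ y = u y - w y := by
        filter_upwards [hwc.eventually_lt huc h, isOpen_ball.mem_nhds hx] with y hy1 hy2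
        rw [hφf y (ball_subset_closedBall hy2), hf]
        exact max_eq_left (by linarith)
      have hvw : v =ᶠ[nhds x] w := by
        filter_upwards [hev] with y hy
        rw [hv]; simp only [hy]; ring
      have hφx := hev.self_of_nhds
      have hvx := hvw.self_of_nhds
      rw [hvw.gradient_eq, (hwg x).gradient, hvx, Filter.EventuallyEq.fderiv_eq hev,
        fderiv_fun_sub hux (hwg x).differentiableAt, hφx, sub_apply,
        (hwg x).fderiv_apply, hux.hasGradientAt.fderiv_apply, ← inner_sub_left,
        ← real_inner_smul_right, ap_fgam_pos _ _ _ _ hγ0 (hw0 x),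
        ap_fgam_pos _ _ _ _ hγ0 ((hw0 x).trans h.le)]
      have h1 := ap_young p q hpq (gradient u x) (c • (x - z))
      have h2 := mul_le_mul_of_nonneg_left
        (ap_concave γ M (u x) (w x) hγ0 hγ1 (hw0 x) h (huM x hxc)) hlp.le
      linarith
  have hFi : ∀ g : EuclideanSpace ℝ (Fin N) → ℝ, ContinuousOn g (closedBall z R) →
      IntegrableOn (fun x => Fgam γ lp lm (g x)) (ball z R) := by
    intro g hg
    exact (((ap_fgam_cont γ lp lm hγ0).comp_continuousOn hg).integrableOn_compact
      (isCompact_closedBall z R)).mono_set ball_subset_closedBall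
  have hIu : IntegrableOn (fun x => ‖gradient u x‖ ^ p / p + Fgam γ lp lm (u x)) (ball z R) :=
    Integrable.add ((hui.mono_set (ball_subset_closedBall.trans hsub)).div_const p)
      (hFi u hK1.continuousOn)
  have hIv : IntegrableOn (fun x => ‖gradient v x‖ ^ p / p + Fgam γ lp lm (v x)) (ball z R) := by
    refine Integrable.add (Integrable.div_const ?_ p) (hFi v hvL.continuousOn)
    simp_rw [ap_norm_grad]
    refine Measure.integrableOn_of_bounded (M := ((K1 + (K1 + K2) : NNReal) : ℝ) ^ p)
      measure_ball_lt_top.ne ?_ ?_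
    · exact ((measurable_fderiv ℝ v).norm.pow_const p).aestronglyMeasurable
    · filter_upwards [ae_restrict_mem measurableSet_ball] with x hx
      rw [Real.norm_of_nonneg (by positivity)]
      gcongr
      exact norm_fderiv_le_of_lipschitzOn ℝ
        (Filter.mem_of_superset (isOpen_ball.mem_nhds hx) ball_subset_closedBall) hvL
  have hIg : Integrable
      (fun x => c * fderiv ℝ φ x (x - z) + lp * (γ * M ^ (γ - 1)) * φ x) :=
    (hDi.const_mul c).add (hφi.const_mul _)
  have hle : ∫ x in ball z R, ((‖gradient v x‖ ^ p / p + Fgam γ lp lm (v x)) +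
      (c * fderiv ℝ φ x (x - z) + lp * (γ * M ^ (γ - 1)) * φ x)) ≤
      ∫ x in ball z R, (‖gradient u x‖ ^ p / p + Fgam γ lp lm (u x)) := by
    refine integral_mono_ae (hIv.add hIg.integrableOn) hIu ?_
    filter_upwards [ae_restrict_mem measurableSet_ball,
      ae_restrict_of_ae (hφL.ae_differentiableAt (μ := volume))] with x hx hdx
    exact hpt x hx hdx
  rw [integral_add hIv hIg.integrableOn] at hle
  rw [setIntegral_eq_integral_of_forall_compl_eq_zero (s := ball z R)
    (f := fun x => c * fderiv ℝ φ x (x - z) + lp * (γ * M ^ (γ - 1)) * φ x)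
    (fun x hx => by simp [hφB x hx, hφd x (hφB x hx)]),
    integral_add (hDi.const_mul c) (hφi.const_mul _), integral_const_mul, integral_const_mul,
    hD] at hle
  by_contra hz
  push Not at hz
  have hφz : φ z ≠ 0 := by
    rw [hφf z (mem_closedBall_self hR.le), hf]
    simp only [hwz, sub_zero]
    exact (lt_max_of_lt_left hz).ne'
  have hpos : 0 < ∫ x, φ x :=
    hφL.continuous.integral_pos_of_hasCompactSupport_nonneg_nonzero hφc hφ0 hφz
  nlinarith [mul_pos (sub_pos.2 hcm) hpos]

lemma ap_grad_neg {E : Type*} [NormedAddCommGroup E] [InnerProductSpace ℝ E] [CompleteSpace E]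
    (f : E → ℝ) (x : E) : gradient (fun y => - f y) x = - gradient f x := by
  unfold gradient
  rw [fderiv_fun_neg, map_neg]

lemma ap_fgam_neg (γ lp lm t : ℝ) : Fgam γ lm lp (-t) = Fgam γ lp lm t := by
  unfold Fgam
  rw [neg_neg]; ring

lemma ap_neg (N : ℕ) (p γ lp lm : ℝ) (Ω : Set (EuclideanSpace ℝ (Fin N)))
    (u : EuclideanSpace ℝ (Fin N) → ℝ) (hu : APLocMin N p (Fgam γ lp lm) Ω u) :
    APLocMin N p (Fgam γ lm lp) Ω (fun x => - u x) := by
  obtain ⟨h1, h2, h3, h4⟩ := hu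
  refine ⟨fun x hx => (h1 x hx).neg, ?_, ?_, ?_⟩
  · simp_rw [ap_grad_neg]; exact h2.neg
  · simp_rw [ap_grad_neg, norm_neg]; exact h3
  · intro z r hr hs v K hv hvu
    have := h4 z r hr hs (fun x => - v x) K hv.neg (fun x hx => by simp [hvu hx])
    simp_rw [ap_grad_neg, norm_neg, ap_fgam_neg]
    simp_rw [ap_grad_neg, norm_neg] at this
    simp_rw [← ap_fgam_neg γ lp lm (- v _), neg_neg] at this
    exact this

lemma ap_consts (N : ℕ) (hN : 1 ≤ N) (p q γ l R θ : ℝ) (hpq : p.HolderConjugate q)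
    (hγ0 : 0 < γ) (hγp : γ < p) (hl : 0 < l) (hR : 0 < R)
    (hθ : θ = l * γ / (2 * N * q ^ (p - 1))) :
    0 < (θ * R ^ p) ^ (1 / (p - γ)) ∧ ∃ c, 0 < c ∧
      (θ * R ^ p) ^ (1 / (p - γ)) ≤ (c * q)⁻¹ * (c * R) ^ q ∧
      c * N < l * (γ * ((θ * R ^ p) ^ (1 / (p - γ))) ^ (γ - 1)) := by
  have hN0 : (0 : ℝ) < N := by exact_mod_cast hN
  have hq0 : 0 < q := hpq.symm.pos
  have hp1 : 0 < p - 1 := by linarith [hpq.lt]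
  have hθ0 : 0 < θ := by rw [hθ]; positivity
  obtain ⟨M, hM⟩ : ∃ M, M = (θ * R ^ p) ^ (1 / (p - γ)) := ⟨_, rfl⟩
  have hM0 : 0 < M := by rw [hM]; positivity
  have hMp : M ^ (p - γ) = θ * R ^ p := by
    rw [hM, ← Real.rpow_mul (by positivity), one_div, inv_mul_cancel₀ (by linarith),
      Real.rpow_one]
  rw [← hM]
  refine ⟨hM0, l * γ * M ^ (γ - 1) / (2 * N), by positivity, ?_, ?_⟩
  · obtain ⟨c, hc⟩ : ∃ c, c = l * γ * M ^ (γ - 1) / (2 * N) := ⟨_, rfl⟩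
    have hc0 : 0 < c := by rw [hc]; positivity
    rw [← hc, inv_mul_eq_div, le_div_iff₀ (by positivity)]
    rw [← Real.rpow_le_rpow_iff (z := p - 1) (by positivity) (by positivity) hp1,
      ← Real.rpow_mul (by positivity), mul_comm q (p - 1), hpq.sub_one_mul_conj,
      Real.mul_rpow hM0.le (by positivity), Real.mul_rpow hc0.le hq0.le,
      Real.mul_rpow hc0.le hR.le]
    have e1 : M ^ (p - 1) = θ * R ^ p * M ^ (γ - 1) := by
      rw [← hMp, ← Real.rpow_add hM0]; ring_nf
    have e2 : c ^ p = c ^ (p - 1) * c := by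
      rw [← Real.rpow_add_one hc0.ne']; ring_nf
    have e3 : θ * q ^ (p - 1) * M ^ (γ - 1) = c := by
      rw [hθ, hc]
      have : q ^ (p - 1) ≠ 0 := by positivity
      field_simp
    rw [e1, e2]
    apply le_of_eq
    calc θ * R ^ p * M ^ (γ - 1) * (c ^ (p - 1) * q ^ (p - 1))
        = c ^ (p - 1) * (θ * q ^ (p - 1) * M ^ (γ - 1)) * R ^ p := by ring
      _ = _ := by rw [e3]
  · have : 0 < l * γ * M ^ (γ - 1) := by positivity
    rw [div_mul_eq_mul_div, div_lt_iff₀ (by positivity)]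
    nlinarith [mul_pos this hN0]

lemma ap_ball_sub {E : Type*} [NormedAddCommGroup E] [NormedSpace ℝ E] (Ω : Set E)
    (hΩ : IsOpen Ω) (z : E) (hz : z ∈ Ω) (d r : ℝ) (hr : r ≤ d) (hr0 : 0 < r)
    (hd : d ≤ infDist z (frontier Ω)) : ball z r ⊆ Ω := by
  by_contra h
  obtain ⟨y, hy, hyΩ⟩ := not_subset.1 h
  have hpc : IsPreconnected (ball z r) := (convex_ball z r).isPreconnected
  have hnf : ∀ x ∈ ball z r, x ∉ frontier Ω := by
    intro x hx hxf
    have := infDist_le_dist_of_mem (x := z) hxf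
    rw [mem_ball, dist_comm] at hx
    linarith
  have hcov : ball z r ⊆ Ω ∪ (closure Ω)ᶜ := by
    intro x hx
    by_contra hcon
    simp only [mem_union, mem_compl_iff, not_or, not_not] at hcon
    exact hnf x hx ⟨hcon.2, fun h => hcon.1 (interior_subset h)⟩
  obtain ⟨x, -, hx1, hx2⟩ := hpc Ω (closure Ω)ᶜ hΩ isClosed_closure.isOpen_compl hcov
    ⟨z, mem_ball_self hr0, hz⟩ ⟨y, hy, (hcov hy).resolve_left hyΩ⟩
  exact hx2 (subset_closure hx1)

lemma ap_half (N : ℕ) (hN : 1 ≤ N) (p q γ lp lm l : ℝ) (hpq : p.HolderConjugate q)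
    (hγ0 : 0 < γ) (hγ1 : γ ≤ 1) (hγp : γ < p) (hl : 0 < l) (hllp : l ≤ lp) (θ : ℝ)
    (hθ : θ = l * γ / (2 * N * q ^ (p - 1)))
    (Ω : Set (EuclideanSpace ℝ (Fin N))) (u : EuclideanSpace ℝ (Fin N) → ℝ)
    (hu : APLocMin N p (Fgam γ lp lm) Ω u) (z : EuclideanSpace ℝ (Fin N)) (r : ℝ) (hr : 0 < r)
    (hsub : ball z (r / 2) ⊆ Ω)
    (hM : ∀ y ∈ ball z (r / 2), u y ≤ (θ * (r / 8) ^ p) ^ (1 / (p - γ))) :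
    z ∉ frontier {x ∈ Ω | 0 < u x} := by
  intro hz
  obtain ⟨hM0, c, hc, h1, h2⟩ :=
    ap_consts N hN p q γ l (r / 8) θ hpq hγ0 hγp hl (by positivity) hθ
  have hneg : ∀ x ∈ ball z (r / 8), u x ≤ 0 := by
    intro x hx
    have hcs : closedBall x (r / 8) ⊆ ball z (r / 2) := by
      intro y hy
      rw [mem_ball] at *
      rw [mem_closedBall] at hy
      linarith [dist_triangle y x z]
    refine ap_core N p q γ lp lm hpq hγ0 hγ1 (hl.trans_le hllp) Ω u hu x (r / 8) (by positivity)
      (hcs.trans hsub) _ c hc (fun y hy => hM y (hcs hy)) h1 (h2.trans_le ?_)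
    gcongr
  obtain ⟨x, hx, hx2⟩ := mem_closure_iff.1 (frontier_subset_closure hz) _ isOpen_ball
    (mem_ball_self (by positivity : 0 < r / 8))
  exact absurd (hneg x hx) (not_le.2 hx2.2)

/-- Local porosity of the zero-gradient free boundary `Γ₀(u)`, assuming the optimal
growth property with constant `C₂`. -/
theorem stmt14 (N : ℕ) (hN : 1 ≤ N) (p γ lp lm C₂ : ℝ)
    (hp : 1 < p) (hγ0 : 0 < γ) (hγ1 : γ ≤ 1) (hγp : γ < p)
    (hlp : 0 < lp) (hlm : 0 < lm) (hC₂ : 0 < C₂) :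
    ∃ κ : ℝ, κ ∈ Set.Ioo (0 : ℝ) 1 ∧
      ∀ (Ω : Set (EuclideanSpace ℝ (Fin N))), IsOpen Ω → Bornology.IsBounded Ω →
      ∀ u : EuclideanSpace ℝ (Fin N) → ℝ, APLocMin N p (Fgam γ lp lm) Ω u →
      ∀ Ω' : Set (EuclideanSpace ℝ (Fin N)), Ω' ⊆ Ω →
      ∀ d : ℝ, 0 < d → (∀ x ∈ Ω', d ≤ Metric.infDist x (frontier Ω)) →
      ∀ ρ₀ : ℝ, 0 < ρ₀ →
        (∀ x ∈ Ω, Metric.infDist x (apFB0 N Ω u) < ρ₀ →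
          |u x| ≤ C₂ * Metric.infDist x (apFB0 N Ω u) ^ (1 + γ / (p - γ))) →
      ∀ z ∈ apFB0 N Ω u ∩ Ω', ∀ r : ℝ, 0 < r → r < min ρ₀ d →
        ∃ y ∈ Metric.ball z r,
          Metric.ball y (κ * r) ⊆ Metric.ball z r \ apFB0 N Ω u := by
  have hpq : p.HolderConjugate (p / (p - 1)) := Real.HolderConjugate.conjExponent hp
  have hN0 : (0 : ℝ) < N := by exact_mod_cast hN
  have hp0 : 0 < p := by linarith
  have hpγ : 0 < p - γ := by linarith
  obtain ⟨q, hq⟩ : ∃ q, q = p / (p - 1) := ⟨_, rfl⟩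
  rw [← hq] at hpq
  have hq0 : 0 < q := hpq.symm.pos
  obtain ⟨l, hl⟩ : ∃ l, l = min lp lm := ⟨_, rfl⟩
  have hl0 : 0 < l := by rw [hl]; exact lt_min hlp hlm
  obtain ⟨θ, hθ⟩ : ∃ θ, θ = l * γ / (2 * N * q ^ (p - 1)) := ⟨_, rfl⟩
  have hθ0 : 0 < θ := by rw [hθ]; positivity
  obtain ⟨κ₁, hκ₁⟩ : ∃ κ₁, κ₁ = (θ / C₂ ^ (p - γ)) ^ (1 / p) / 8 := ⟨_, rfl⟩
  have hκ₁0 : 0 < κ₁ := by rw [hκ₁]; positivity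
  refine ⟨min (1 / 2) κ₁, ⟨lt_min (by norm_num) hκ₁0,
    (min_le_left _ _).trans_lt (by norm_num)⟩, ?_⟩
  intro Ω hΩ _ u hu Ω' hΩ' d hd hdist ρ₀ hρ₀ hgrow z hz r hr hrlt
  obtain ⟨hrρ, hrd⟩ := lt_min_iff.1 hrlt
  have hsub : ball z r ⊆ Ω := ap_ball_sub Ω hΩ z (hΩ' hz.2) d r hrd.le hr (hdist z hz.2)
  have hsub2 : ball z (r / 2) ⊆ Ω := (ball_subset_ball (by linarith)).trans hsub
  obtain ⟨y, hy, hyM⟩ : ∃ y ∈ ball z (r / 2),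
      (θ * (r / 8) ^ p) ^ (1 / (p - γ)) ≤ |u y| := by
    by_contra! hcon
    rcases hz.1.1.1 with h | h
    · exact ap_half N hN p q γ lp lm l hpq hγ0 hγ1 hγp hl0 (by rw [hl]; exact min_le_left _ _) θ hθ
        Ω u hu z r hr hsub2 (fun y hy => (le_abs_self _).trans (hcon y hy).le) h
    · refine ap_half N hN p q γ lm lp l hpq hγ0 hγ1 hγp hl0 (by rw [hl]; exact min_le_right _ _) θ hθ
        Ω _ (ap_neg N p γ lp lm Ω u hu) z r hr hsub2
        (fun y hy => (neg_le_abs _).trans (hcon y hy).le) ?_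
      simpa using h
  have hyz : dist y z < r / 2 := hy
  have hle : infDist y (apFB0 N Ω u) ≤ dist y z := infDist_le_dist_of_mem hz.1
  have hg := hgrow y (hsub2 hy) (by linarith)
  obtain ⟨δ, hδ⟩ : ∃ δ, δ = infDist y (apFB0 N Ω u) := ⟨_, rfl⟩
  have hδ0 : 0 ≤ δ := by rw [hδ]; exact infDist_nonneg
  rw [← hδ] at hg
  have hκδ : κ₁ * r ≤ δ := by
    have h1 := hyM.trans hg
    have h2 := Real.rpow_le_rpow (z := p - γ) (by positivity) h1 hpγ.le
    have he : (1 + γ / (p - γ)) * (p - γ) = p := by field_simp; ring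
    rw [← Real.rpow_mul (by positivity), one_div, inv_mul_cancel₀ hpγ.ne', Real.rpow_one,
      Real.mul_rpow hC₂.le (by positivity), ← Real.rpow_mul hδ0, he] at h2
    rw [← Real.rpow_le_rpow_iff (z := p) (by positivity) hδ0 hp0]
    have h3 : κ₁ * r = (θ / C₂ ^ (p - γ)) ^ (1 / p) * (r / 8) := by rw [hκ₁]; ring
    rw [h3, Real.mul_rpow (by positivity) (by positivity), ← Real.rpow_mul (by positivity),
      one_div, inv_mul_cancel₀ hp0.ne', Real.rpow_one, div_mul_eq_mul_div,
      div_le_iff₀ (by positivity)]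
    linarith
  refine ⟨y, by rw [mem_ball]; linarith, ?_⟩
  intro x hx
  rw [mem_ball] at hx
  have hk1 : min (1 / 2) κ₁ * r ≤ 1 / 2 * r := by gcongr; exact min_le_left _ _
  have hk2 : min (1 / 2) κ₁ * r ≤ κ₁ * r := by gcongr; exact min_le_right _ _
  refine ⟨?_, fun hxF => ?_⟩
  · rw [mem_ball]
    linarith [dist_triangle x y z]
  · have := infDist_le_dist_of_mem (x := y) hxF
    rw [dist_comm, ← hδ] at this
    linarith
end

section
/- Assume 0 < γ ≤ 1 (and γ < p), let u be a local minimizer of J on Ω, and let z₊ ∈ Ω be a one-phase free boundary point: z₊ ∈ ∂{x ∈ Ω : u(x) > 0} but z₊ ∉ ∂{x ∈ Ω : u(x) < 0}. Assume: (growth) there exist ρ₀ > 0 and C₂ > 0 with B_{ρ₀}(z₊) ⊆ Ω and sup_{B_r(z₊)} |u| ≤ C₂ r^{1+τ} for all 0 < r < ρ₀; and (interior Lipschitz estimate) there exists L > 0 such that for every 0 < r < ρ₀/2 and every y ∈ B_r(z₊), one has ‖∇u(x)‖ ≤ L r^τ for all x ∈ B_{r/2}(y). Then there exist c₁ ∈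 (0,1), depending only on N, p, γ, λ₊, C₂ and L, and ρ₁ ∈ (0, ρ₀) such that for every 0 < r < ρ₁: 𝓛^N({x : u(x) > 0} ∩ B_r(z₊)) ≥ c₁ · 𝓛^N(B_r(z₊)). -/
open MeasureTheory Metric Set
open scoped InnerProductSpace

/-- Young-type convexity inequality against the explicit barrier gradient. -/
lemma young_aux {E : Type*} [NormedAddCommGroup E] [InnerProductSpace ℝ E]
    {p q b : ℝ} (hpq : p.HolderConjugate q) (hb : 0 ≤ b) (a X : E) :
    ‖(b * ‖X‖ ^ (q - 2)) • X‖ ^ p / p ≤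
      ‖a‖ ^ p / p - b ^ (p - 1) * inner ℝ (a - (b * ‖X‖ ^ (q - 2)) • X) X := by
  have hp := hpq.lt
  have hq := hpq.symm.lt
  have hp0 : 0 < p := by linarith
  have hq0 : 0 < q := by linarith
  set d := ‖X‖ with hd
  have hd0 : 0 ≤ d := norm_nonneg _
  have e1 : d ^ (q - 2) * d = d ^ (q - 1) := by
    rcases eq_or_lt_of_le hd0 with h | h
    · rw [← h, mul_zero, Real.zero_rpow (by linarith)]
    · rw [← Real.rpow_add_one h.ne']; ring_nf
  have e2 : d ^ (q - 1) * d = d ^ q := by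
    rcases eq_or_lt_of_le hd0 with h | h
    · rw [← h, mul_zero, Real.zero_rpow (by linarith)]
    · rw [← Real.rpow_add_one h.ne']; ring_nf
  have e3 : b ^ (p - 1) * b = b ^ p := by
    rcases eq_or_lt_of_le hb with h | h
    · rw [← h, mul_zero, Real.zero_rpow (by linarith)]
    · rw [← Real.rpow_add_one h.ne']; ring_nf
  have hpq1 : (q - 1) * p = q := hpq.symm.sub_one_mul_conj
  have hpq2 : (p - 1) * q = p := hpq.sub_one_mul_conj
  have n1 : ‖(b * d ^ (q - 2)) • X‖ ^ p = b ^ p * d ^ q := by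
    rw [norm_smul, Real.norm_eq_abs, abs_of_nonneg (by positivity), ← hd, mul_assoc, e1,
      Real.mul_rpow hb (by positivity), ← Real.rpow_mul hd0, hpq1]
  have n2 : b ^ (p - 1) * inner ℝ ((b * d ^ (q - 2)) • X) X = b ^ p * d ^ q := by
    rw [real_inner_smul_left, real_inner_self_eq_norm_sq, ← hd, ← e3, ← e2, ← e1]; ring
  have n3 : b ^ (p - 1) * inner ℝ a X ≤ ‖a‖ ^ p / p + b ^ p * d ^ q / q := by
    have h1 : inner ℝ a X ≤ ‖a‖ * d := real_inner_le_norm a X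
    have h2 := Real.young_inequality_of_nonneg (norm_nonneg a)
      (mul_nonneg (Real.rpow_nonneg hb (p-1)) hd0) hpq
    rw [Real.mul_rpow (by positivity) hd0, ← Real.rpow_mul hb, hpq2] at h2
    have h3 := mul_le_mul_of_nonneg_left h1 (Real.rpow_nonneg hb (p-1))
    linarith
  have h4 : b ^ p * d ^ q / p + b ^ p * d ^ q / q = b ^ p * d ^ q := by
    have := hpq.inv_add_inv_eq_one
    rw [div_eq_mul_inv, div_eq_mul_inv, ← mul_add, this, mul_one]
  rw [n1, inner_sub_left, mul_sub, n2]
  linarith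

lemma rpow_concave_aux {γ u w M : ℝ} (hγ0 : 0 < γ) (hγ1 : γ ≤ 1) (hw : 0 ≤ w) (hwu : w < u)
    (huM : u ≤ M) : γ * M ^ (γ - 1) * (u - w) ≤ u ^ γ - w ^ γ := by
  have hu : 0 < u := by linarith
  have h := rpow_one_add_le_one_add_mul_self (s := w / u - 1)
    (by have : 0 ≤ w / u := by positivity
        linarith) hγ0.le hγ1
  have h1 : 1 + (w / u - 1) = w / u := by ring
  rw [h1, Real.div_rpow hw hu.le, div_le_iff₀ (by positivity)] at h
  have h2 : u ^ γ = u ^ (γ - 1) * u := by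
    rw [← Real.rpow_add_one hu.ne']; ring_nf
  have h3 : M ^ (γ - 1) ≤ u ^ (γ - 1) := Real.rpow_le_rpow_of_nonpos hu huM (by linarith)
  have h4 : (1 + γ * (w / u - 1)) * u ^ γ = u ^ γ - γ * u ^ (γ - 1) * (u - w) := by
    rw [h2]; field_simp; ring
  have h5 : γ * M ^ (γ - 1) * (u - w) ≤ γ * u ^ (γ - 1) * (u - w) := by
    have : 0 ≤ u - w := by linarith
    gcongr
  linarith

lemma lineDeriv_zero_aux {E : Type*} [NormedAddCommGroup E] [NormedSpace ℝ E]
    {g : E → ℝ} (hg : ∀ x, 0 ≤ g x) {x : E} (hx : g x = 0) (v : E) :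
    lineDeriv ℝ g x v = 0 := by
  unfold lineDeriv
  apply IsLocalMin.deriv_eq_zero
  refine Filter.Eventually.of_forall fun t => ?_
  simp only [zero_smul, add_zero, hx]
  exact hg _

/-- Integration by parts against the position field. -/
lemma ibp_aux (N : ℕ) (y : EuclideanSpace ℝ (Fin N)) (r : ℝ)
    (g : EuclideanSpace ℝ (Fin N) → ℝ) (C : NNReal) (hgL : LipschitzWith C g)
    (hg0 : ∀ x, 0 ≤ g x) (hgz : ∀ x ∉ ball y r, g x = 0) :
    IntegrableOn (fun x => inner ℝ (gradient g x) (x - y)) (ball y r) volume ∧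
    ∫ x in ball y r, inner ℝ (gradient g x) (x - y) = - (N * ∫ x in ball y r, g x) := by
  have hcs : HasCompactSupport g := by
    apply HasCompactSupport.intro (isCompact_closedBall y r)
    intro x hx
    exact hgz x fun h => hx (ball_subset_closedBall h)
  let e : Fin N → EuclideanSpace ℝ (Fin N) := fun i => EuclideanSpace.single i (1:ℝ)
  let f : Fin N → EuclideanSpace ℝ (Fin N) → ℝ := fun i x => x i - y i
  have hfL : ∀ i, LipschitzWith 1 (f i) := by
    intro i
    apply LipschitzWith.of_dist_le_mul
    intro a b
    simp only [f, NNReal.coe_one, one_mul, dist_eq_norm]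
    have := PiLp.norm_apply_le (a - b) i
    simpa using this
  have hfd : ∀ i x, lineDeriv ℝ (f i) x (e i) = 1 := by
    intro i x
    unfold lineDeriv
    have : (fun t : ℝ => f i (x + t • e i)) = fun t => t + (x i - y i) := by
      funext t; simp [f, e]; ring
    rw [this]; simp
  have hint : ∀ i, IntegrableOn (fun x => lineDeriv ℝ g x (e i) * f i x) (ball y r) volume := by
    intro i
    apply Measure.integrableOn_of_bounded (M := C * ‖e i‖ * r) measure_ball_lt_top.ne
    · exact ((measurable_lineDeriv hgL.continuous).mul
        (hfL i).continuous.measurable).aestronglyMeasurable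
    · filter_upwards [ae_restrict_mem measurableSet_ball] with x hx
      rw [norm_mul]
      have h1 : ‖lineDeriv ℝ g x (e i)‖ ≤ C * ‖e i‖ := norm_lineDeriv_le_of_lipschitz ℝ hgL
      have h2 : ‖f i x‖ ≤ r := by
        have := PiLp.norm_apply_le (x - y) i
        rw [mem_ball, dist_eq_norm] at hx
        simp only [f]
        exact le_trans (by simpa using this) hx.le
      exact mul_le_mul h1 h2 (norm_nonneg _) (by positivity)
  have hval : ∀ i, ∫ x in ball y r, lineDeriv ℝ g x (e i) * f i x = - ∫ x in ball y r, g x := by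
    intro i
    have h := (hfL i).integral_lineDeriv_mul_eq (μ := volume) hgL hcs (e i)
    simp only [hfd, one_mul, lineDeriv_neg, neg_mul] at h
    rw [integral_neg] at h
    rw [setIntegral_eq_integral_of_forall_compl_eq_zero,
      setIntegral_eq_integral_of_forall_compl_eq_zero, h, neg_neg]
    · exact hgz
    · intro x hx
      rw [lineDeriv_zero_aux hg0 (hgz x hx), zero_mul]
  have hae : (fun x => ∑ i, lineDeriv ℝ g x (e i) * f i x) =ᵐ[volume.restrict (ball y r)]
      fun x => inner ℝ (gradient g x) (x - y) := by
    filter_upwards [ae_restrict_of_ae (hgL.ae_differentiableAt (μ := volume))] with x hx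
    have h1 : inner ℝ (gradient g x) (x - y) = fderiv ℝ g x (x - y) := by
      rw [← toDual_gradient, InnerProductSpace.toDual_apply_apply]
    have h2 : x - y = ∑ i, f i x • e i := by
      ext j
      simp [f, e, Finset.sum_apply, Pi.single_apply]
    rw [h1, h2, map_sum]
    refine Finset.sum_congr rfl fun i _ => ?_
    rw [hx.lineDeriv_eq_fderiv, map_smul, smul_eq_mul, mul_comm]
  constructor
  · exact (integrable_finsetSum _ fun i _ => hint i).congr hae
  · rw [← integral_congr_ae hae, integral_finsetSum _ fun i _ => hint i]
    simp [hval]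

/-- Core comparison: a small minimizer near a point of positivity is impossible. -/
lemma core_aux (N : ℕ) (p q γ lp lm : ℝ) (hpq : p.HolderConjugate q)
    (hγ0 : 0 < γ) (hγ1 : γ ≤ 1) (hlp : 0 < lp) (hlm : 0 < lm)
    (Ω : Set (EuclideanSpace ℝ (Fin N))) (u : EuclideanSpace ℝ (Fin N) → ℝ)
    (hmin : APLocMin N p (Fgam γ lp lm) Ω u) (y : EuclideanSpace ℝ (Fin N)) (r M : ℝ)
    (hr : 0 < r) (hM : 0 < M) (hsub : closedBall y r ⊆ Ω)
    (hu0 : ∀ x ∈ closedBall y r, 0 ≤ u x) (huM : ∀ x ∈ closedBall y r, u x ≤ M)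
    (huy : 0 < u y) (K : NNReal) (hK : LipschitzOnWith K u (closedBall y r))
    (hcond : N * (M * r ^ (-q) * q) ^ (p - 1) < lp * (γ * M ^ (γ - 1))) : False := by
  obtain ⟨hdiff, hgc, hgi, hmin⟩ := hmin
  have hq1 : 1 < q := hpq.symm.lt
  have hp1 : 1 < p := hpq.lt
  set A := M * r ^ (-q) with hA
  have hA0 : 0 < A := by positivity
  have hAr : A * r ^ q = M := by
    rw [hA, mul_assoc, ← Real.rpow_add hr]; simp
  obtain ⟨U, hUL, hUe⟩ := hK.extend_real
  -- the truncated barrier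
  let W : EuclideanSpace ℝ (Fin N) → ℝ := fun x => A * ‖min ‖x - y‖ r‖ ^ q
  have hWin : ∀ x ∈ closedBall y r, W x = A * ‖x - y‖ ^ q := by
    intro x hx
    rw [mem_closedBall, dist_eq_norm] at hx
    simp only [W, min_eq_left hx, norm_norm]
  have hWout : ∀ x ∉ ball y r, W x = M := by
    intro x hx
    rw [mem_ball, dist_eq_norm, not_lt] at hx
    simp only [W, min_eq_right hx, Real.norm_eq_abs, abs_of_pos hr, hAr]
  have hW0 : ∀ x, 0 ≤ W x := fun x => by positivity
  obtain ⟨KW, hWL⟩ : ∃ KW, LipschitzWith KW W := by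
    have hc : ContDiff ℝ 1 (fun t : ℝ => A * ‖t‖ ^ q) := contDiff_const.mul (contDiff_norm_rpow hq1)
    obtain ⟨k, hk⟩ := hc.contDiffOn.exists_lipschitzOnWith one_ne_zero (convex_Icc (0:ℝ) r)
      isCompact_Icc
    have hm : LipschitzWith 1 (fun x : EuclideanSpace ℝ (Fin N) => min ‖x - y‖ r) := by
      apply LipschitzWith.min_const
      apply LipschitzWith.of_dist_le_mul
      intro a b
      rw [NNReal.coe_one, one_mul, Real.dist_eq, dist_eq_norm]
      simpa using abs_norm_sub_norm_le (a - y) (b - y)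
    refine ⟨k * 1, ?_⟩
    rw [← lipschitzOnWith_univ] at hm ⊢
    refine hk.comp hm ?_
    intro x _
    exact ⟨le_min (norm_nonneg _) hr.le, min_le_right _ _⟩
  let g : EuclideanSpace ℝ (Fin N) → ℝ := fun x => max (min (U x) M - W x) 0
  have hgL : LipschitzWith (K + KW) g := ((hUL.min_const M).sub hWL).max_const 0
  have hg0 : ∀ x, 0 ≤ g x := fun x => le_max_right _ _
  have hgz : ∀ x ∉ ball y r, g x = 0 := by
    intro x hx
    simp only [g, hWout x hx]
    exact max_eq_right (by linarith [min_le_right (U x) M])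
  have hgin : ∀ x ∈ closedBall y r, g x = max (u x - W x) 0 := by
    intro x hx
    simp only [g, ← hUe hx, min_eq_left (huM x hx)]
  let v : EuclideanSpace ℝ (Fin N) → ℝ := fun x => u x - g x
  have hcl : closure (ball y r) = closedBall y r := closure_ball y hr.ne'
  have hvL : LipschitzOnWith (K + (K + KW)) v (closure (ball y r)) := by
    rw [hcl]; exact hK.sub hgL.lipschitzOnWith
  have hcomp := hmin y r hr (by rw [hcl]; exact hsub) v _ hvL (by
    intro x hx
    have : x ∉ ball y r := by
      rw [mem_ball, mem_sphere.1 hx]; exact lt_irrefl _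
    simp [v, hgz x this])
  obtain ⟨hI1, hI2⟩ := ibp_aux N y r g _ hgL hg0 hgz
  set B := (A * q) ^ (p - 1) with hB
  have hFc : Continuous (Fgam γ lp lm) := by
    unfold Fgam
    have h1 : Continuous fun t : ℝ => (max t 0) ^ γ :=
      (continuous_id.max continuous_const).rpow_const fun _ => Or.inr hγ0.le
    have h2 : Continuous fun t : ℝ => (max (-t) 0) ^ γ :=
      (continuous_neg.max continuous_const).rpow_const fun _ => Or.inr hγ0.le
    exact (continuous_const.mul h1).add (continuous_const.mul h2)
  have hF0 : ∀ t, 0 ≤ Fgam γ lp lm t := by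
    intro t; unfold Fgam; positivity
  have hIu : IntegrableOn (fun x => ‖gradient u x‖ ^ p / p + Fgam γ lp lm (u x))
      (ball y r) volume := by
    apply Integrable.add
    · exact (hgi.mono_set (ball_subset_closedBall.trans hsub)).div_const p
    · exact ((hFc.comp_continuousOn hK.continuousOn).integrableOn_compact
        (isCompact_closedBall y r)).mono_set ball_subset_closedBall
  have hIg : IntegrableOn g (ball y r) volume :=
    (hgL.continuous.continuousOn.integrableOn_compact
        (isCompact_closedBall y r)).mono_set ball_subset_closedBall
  set κ := lp * (γ * M ^ (γ - 1)) with hκ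
  have hpt : ∀ᵐ x ∂(volume.restrict (ball y r)),
      ‖gradient v x‖ ^ p / p + Fgam γ lp lm (v x) ≤
        (‖gradient u x‖ ^ p / p + Fgam γ lp lm (u x)) -
          (B * inner ℝ (gradient g x) (x - y) + κ * g x) := by
    filter_upwards [ae_restrict_of_ae (hgL.ae_differentiableAt (μ := volume)),
      ae_restrict_mem measurableSet_ball] with x hgd hx
    have hxc := ball_subset_closedBall hx
    have hud : DifferentiableAt ℝ u x := hdiff x (hsub hxc)
    have hgv : gradient v x = gradient u x - gradient g x := by
      apply HasGradientAt.gradient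
      rw [hasGradientAt_iff_hasFDerivAt, map_sub, toDual_gradient, toDual_gradient]
      exact hud.hasFDerivAt.sub hgd.hasFDerivAt
    by_cases hgx : g x = 0
    · have hgg : gradient g x = 0 := by
        have : fderiv ℝ g x = 0 := IsLocalMin.fderiv_eq_zero
          (Filter.Eventually.of_forall fun t => by rw [hgx]; exact hg0 t)
        rw [gradient, this, map_zero]
      rw [hgv, hgg]
      simp [v, hgx]
    · have hpos : W x < u x := by
        by_contra h
        apply hgx
        rw [hgin x hxc]
        exact max_eq_right (by linarith)
      have hgx' : g x = u x - W x := by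
        rw [hgin x hxc]; exact max_eq_left (by linarith)
      have hvx : v x = W x := by simp [v, hgx']
      -- gradient of g
      have hWg : HasFDerivAt (fun x => A * ‖x - y‖ ^ q)
          (InnerProductSpace.toDual ℝ _ ((A * q * ‖x - y‖ ^ (q - 2)) • (x - y))) x := by
        have h1 := (hasFDerivAt_norm_rpow (x - y) hq1).comp x
          ((hasFDerivAt_id x).sub_const y)
        have h2 := h1.const_mul A
        refine h2.congr_fderiv ?_
        ext t
        simp [real_inner_smul_left]
        ring
      have hev : v =ᶠ[nhds x] fun x => A * ‖x - y‖ ^ q := by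
        have hc1 : ContinuousAt u x := hud.continuousAt
        have hc2 : ContinuousAt W x := hWL.continuous.continuousAt
        filter_upwards [hc2.eventually_lt hc1 hpos, isOpen_ball.mem_nhds hx] with t ht htb
        have htc := ball_subset_closedBall htb
        have h1 : g t = u t - W t := by rw [hgin t htc, max_eq_left (sub_pos.2 ht).le]
        simp only [v, h1, ← hWin t htc]
        ring
      have hgv2 : gradient v x = (A * q * ‖x - y‖ ^ (q - 2)) • (x - y) := by
        apply HasGradientAt.gradient
        rw [hasGradientAt_iff_hasFDerivAt]
        exact hWg.congr_of_eventuallyEq hev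
      have hgg : gradient g x = gradient u x - (A * q * ‖x - y‖ ^ (q - 2)) • (x - y) := by
        rw [← hgv2, hgv]; abel
      have hy := young_aux hpq (b := A * q) (by positivity) (gradient u x) (x - y)
      have hc := rpow_concave_aux hγ0 hγ1 (hW0 x) hpos (huM x hxc)
      have hF1 : Fgam γ lp lm (u x) = lp * (u x) ^ γ := by
        have : 0 ≤ u x := hu0 x hxc
        unfold Fgam
        rw [max_eq_left this, max_eq_right (by linarith), Real.zero_rpow hγ0.ne']; ring
      have hF2 : Fgam γ lp lm (W x) = lp * (W x) ^ γ := by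
        have : 0 ≤ W x := hW0 x
        unfold Fgam
        rw [max_eq_left this, max_eq_right (by linarith), Real.zero_rpow hγ0.ne']; ring
      have hc' := mul_le_mul_of_nonneg_left hc hlp.le
      rw [hvx, hF1, hF2, hgv2, hgg, hgx', hκ]
      linarith
  have hIR : IntegrableOn (fun x => B * inner ℝ (gradient g x) (x - y) + κ * g x)
      (ball y r) volume := (hI1.const_mul B).add (hIg.const_mul κ)
  have hle := integral_mono_of_nonneg (Filter.Eventually.of_forall fun x => by
    have := hF0 (v x)
    have h0 : 0 < p := by linarith
    simp only [Pi.zero_apply]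
    positivity) (hIu.sub hIR) hpt
  simp only [Pi.sub_apply] at hle
  rw [integral_sub hIu hIR, integral_add (hI1.const_mul B) (hIg.const_mul κ),
    integral_const_mul, integral_const_mul, hI2] at hle
  have hgpos : 0 < ∫ x in ball y r, g x := by
    have hset : ∫ x in ball y r, g x = ∫ x, g x :=
      setIntegral_eq_integral_of_forall_compl_eq_zero hgz
    rw [hset]
    apply hgL.continuous.integral_pos_of_hasCompactSupport_nonneg_nonzero (x := y)
    · apply HasCompactSupport.intro (isCompact_closedBall y r)
      intro x hx
      exact hgz x fun h => hx (ball_subset_closedBall h)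
    · exact hg0
    · have hyc : y ∈ closedBall y r := mem_closedBall_self hr.le
      rw [hgin y hyc, hWin y hyc, sub_self, norm_zero, Real.zero_rpow (by linarith), mul_zero,
        sub_zero, max_eq_left huy.le]
      exact huy.ne'
  have : 0 < (κ - N * B) * ∫ x in ball y r, g x := mul_pos (by linarith) hgpos
  have h3 := hcomp.trans hle
  nlinarith

/-- Lower Lebesgue density estimate for the positive phase at a one-phase free
boundary point, assuming growth and interior Lipschitz estimates. -/
theorem stmt16 (N : ℕ) (hN : 1 ≤ N) (p γ lp C₂ L : ℝ)
    (hp : 1 < p) (hγ0 : 0 < γ) (hγ1 : γ ≤ 1) (hγp : γ < p)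
    (hlp : 0 < lp) (hC₂ : 0 < C₂) (hL : 0 < L) :
    ∃ c₁ : ℝ, c₁ ∈ Set.Ioo (0 : ℝ) 1 ∧
      ∀ lm : ℝ, 0 < lm →
      ∀ (Ω : Set (EuclideanSpace ℝ (Fin N))), IsOpen Ω → Bornology.IsBounded Ω →
      ∀ u : EuclideanSpace ℝ (Fin N) → ℝ, APLocMin N p (Fgam γ lp lm) Ω u →
      ∀ z : EuclideanSpace ℝ (Fin N), z ∈ Ω →
        z ∈ frontier {x ∈ Ω | 0 < u x} → z ∉ frontier {x ∈ Ω | u x < 0} →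
      ∀ ρ₀ : ℝ, 0 < ρ₀ → Metric.ball z ρ₀ ⊆ Ω →
        (∀ r : ℝ, 0 < r → r < ρ₀ → ∀ x ∈ Metric.ball z r,
          |u x| ≤ C₂ * r ^ (1 + γ / (p - γ))) →
        (∀ r : ℝ, 0 < r → r < ρ₀ / 2 → ∀ y ∈ Metric.ball z r,
          ∀ x ∈ Metric.ball y (r / 2), ‖gradient u x‖ ≤ L * r ^ (γ / (p - γ))) →
      ∃ ρ₁ : ℝ, 0 < ρ₁ ∧ ρ₁ < ρ₀ ∧
        ∀ r : ℝ, 0 < r → r < ρ₁ →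
          ENNReal.ofReal c₁ * volume (Metric.ball z r) ≤
            volume ({x ∈ Ω | 0 < u x} ∩ Metric.ball z r) := by
  have hN0 : (0:ℝ) < N := by exact_mod_cast hN
  obtain ⟨q, hpq⟩ : ∃ q, p.HolderConjugate q := ⟨_, Real.HolderConjugate.conjExponent hp⟩
  have hq1 : 1 < q := hpq.symm.lt
  have hpγ : 0 < p - γ := by linarith
  set τ := γ / (p - γ) with hτ
  set ε : ℝ := (lp * γ / (2 * (N * q ^ (p - 1)))) ^ (1 / (p - γ)) with hε
  have hε0 : 0 < ε := by positivity
  have hεp : ε ^ (p - γ) = lp * γ / (2 * (N * q ^ (p - 1))) := by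
    rw [hε, ← Real.rpow_mul (by positivity), one_div_mul_cancel hpγ.ne', Real.rpow_one]
  -- the smallness condition, at every scale
  have hcond : ∀ r : ℝ, 0 < r →
      N * (ε * r ^ (1 + τ) * r ^ (-q) * q) ^ (p - 1) <
        lp * (γ * (ε * r ^ (1 + τ)) ^ (γ - 1)) := by
    intro r hr
    set M := ε * r ^ (1 + τ) with hM
    have hM0 : 0 < M := by positivity
    have e1 : (r ^ (-q)) ^ (p - 1) = (r ^ p)⁻¹ := by
      rw [← Real.rpow_mul hr.le, ← Real.rpow_neg hr.le]
      have := hpq.sub_one_mul_conj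
      congr 1; linarith
    have e2 : M ^ (p - 1) = M ^ (p - γ) * M ^ (γ - 1) := by
      rw [← Real.rpow_add hM0]; congr 1; ring
    have e3 : M ^ (p - γ) = ε ^ (p - γ) * r ^ p := by
      rw [hM, Real.mul_rpow hε0.le (by positivity), ← Real.rpow_mul hr.le]
      congr 2
      rw [hτ]; field_simp; ring
    have hrp : 0 < r ^ p := by positivity
    have hqp : 0 < q ^ (p - 1) := by positivity
    rw [Real.mul_rpow (by positivity) (by positivity), Real.mul_rpow hM0.le (by positivity), e1, e2,
      e3, hεp]
    have e4 : N * (lp * γ / (2 * (N * q ^ (p - 1))) * r ^ p * M ^ (γ - 1) * (r ^ p)⁻¹ *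
        q ^ (p - 1)) = lp * γ * M ^ (γ - 1) / 2 := by
      field_simp
    rw [e4]
    have : 0 < lp * γ * M ^ (γ - 1) := by positivity
    linarith
  set θ : ℝ := min (1 / 2) (ε * (1 / 4) ^ (1 + τ) / L) with hθ
  have hθ0 : 0 < θ := by positivity
  have hθ1 : θ ≤ 1 / 2 := min_le_left _ _
  have hθ2 : L * θ ≤ ε * (1 / 4) ^ (1 + τ) := by
    have : θ ≤ ε * (1 / 4) ^ (1 + τ) / L := min_le_right _ _
    rw [le_div_iff₀ hL] at this; linarith
  refine ⟨θ ^ N, ⟨by positivity, pow_lt_one₀ hθ0.le (by linarith) (by omega)⟩, ?_⟩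
  intro lm hlm Ω hΩ _ u hu z hz hzf hzn ρ₀ hρ₀ hbΩ _ hgrad
  have hcont : ∀ x ∈ Ω, ContinuousAt u x := fun x hx => (hu.1 x hx).continuousAt
  have hzcl : z ∈ closure {x ∈ Ω | 0 < u x} := hzf.1
  -- `u z ≥ 0`
  have huz : 0 ≤ u z := by
    by_contra h
    push Not at h
    have hev := (hcont z hz).eventually_lt_const h
    obtain ⟨t, ht, ht2⟩ := mem_closure_iff_nhds.1 hzcl _ hev
    have h1 : u t < 0 := ht
    have h2 : 0 < u t := ht2.2
    linarith
  have hzn' : z ∉ closure {x ∈ Ω | u x < 0} := by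
    intro h
    apply hzn
    refine ⟨h, fun hi => ?_⟩
    have := (interior_subset hi).2
    linarith
  obtain ⟨δ, hδ, hδs⟩ := Metric.isOpen_iff.1 isClosed_closure.isOpen_compl z hzn'
  have hupos : ∀ x ∈ ball z δ, x ∈ Ω → 0 ≤ u x := by
    intro x hx hxΩ
    by_contra h
    push Not at h
    exact hδs hx (subset_closure ⟨hxΩ, h⟩)
  refine ⟨min δ (ρ₀ / 2), by positivity, lt_of_le_of_lt (min_le_right _ _) (by linarith), ?_⟩
  intro R hR hRlt
  have hRδ : R < δ := hRlt.trans_le (min_le_left _ _)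
  have hRρ : R < ρ₀ / 2 := hRlt.trans_le (min_le_right _ _)
  have hballΩ : ball z R ⊆ Ω := (ball_subset_ball (by linarith)).trans hbΩ
  obtain ⟨y, hyS, hyz⟩ := Metric.mem_closure_iff.1 hzcl (R / 4) (by positivity)
  rw [dist_comm] at hyz
  have hcb : closedBall y (R / 4) ⊆ ball z (R / 2 + R / 100) := by
    intro t ht
    rw [mem_closedBall] at ht
    rw [mem_ball]
    have := dist_triangle t y z
    linarith
  have hcb2 : closedBall y (R / 4) ⊆ ball z R := hcb.trans (ball_subset_ball (by linarith))
  have hfd : ∀ y' ∈ ball z R, ∀ x ∈ ball y' (R / 2), ‖fderiv ℝ u x‖ ≤ L * R ^ τ := by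
    intro y' hy' x hx
    have := hgrad R hR hRρ y' hy' x hx
    rwa [gradient, LinearIsometryEquiv.norm_map] at this
  have hyR : y ∈ ball z R := by rw [mem_ball]; linarith
  -- nondegeneracy
  obtain ⟨x, hx, hxM⟩ : ∃ x ∈ closedBall y (R / 4), ε * (R / 4) ^ (1 + τ) < u x := by
    by_contra hcon
    push Not at hcon
    refine core_aux N p q γ lp lm hpq hγ0 hγ1 hlp hlm Ω u hu y (R / 4) (ε * (R / 4) ^ (1 + τ))
      (by positivity) (by positivity) (hcb2.trans hballΩ)
      (fun t ht => hupos t (ball_subset_ball hRδ.le (hcb2 ht)) (hballΩ (hcb2 ht))) hcon hyS.2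
      (L * R ^ τ).toNNReal ?_ (hcond _ (by positivity))
    apply Convex.lipschitzOnWith_of_nnnorm_fderiv_le (𝕜 := ℝ)
    · exact fun t ht => hu.1 t (hballΩ (hcb2 ht))
    · intro t ht
      rw [← NNReal.coe_le_coe, coe_nnnorm, Real.coe_toNNReal _ (by positivity)]
      refine hfd y hyR t ?_
      rw [mem_closedBall] at ht
      rw [mem_ball]; linarith
    · exact convex_closedBall _ _
  have hxz : dist x z < R / 2 := by
    rw [mem_closedBall] at hx
    have := dist_triangle x y z
    linarith
  have hxR : x ∈ ball z R := by rw [mem_ball]; linarith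
  have hsubR : ball x (R / 2) ⊆ ball z R := by
    intro t ht
    rw [mem_ball] at ht ⊢
    have := dist_triangle t x z
    linarith
  have hincl : ball x (θ * R) ⊆ {x ∈ Ω | 0 < u x} ∩ ball z R := by
    intro t ht
    have ht2 : t ∈ ball x (R / 2) := ball_subset_ball (by nlinarith) ht
    have htR := hsubR ht2
    refine ⟨⟨hballΩ htR, ?_⟩, htR⟩
    have hmv := (convex_ball x (R / 2)).norm_image_sub_le_of_norm_fderiv_le (𝕜 := ℝ) (f := u)
      (fun s hs => hu.1 s (hballΩ (hsubR hs))) (hfd x hxR) (mem_ball_self (by positivity)) ht2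
    rw [mem_ball, dist_eq_norm] at ht
    have h1 : L * R ^ τ * ‖t - x‖ ≤ L * R ^ τ * (θ * R) := by gcongr
    have h2 : R ^ τ * R = R ^ (1 + τ) := by rw [add_comm, Real.rpow_add_one hR.ne']
    have h3 : L * R ^ τ * (θ * R) = L * θ * R ^ (1 + τ) := by rw [← h2]; ring
    have h4 : L * θ * R ^ (1 + τ) ≤ ε * (1 / 4) ^ (1 + τ) * R ^ (1 + τ) := by gcongr
    have h5 : (R / 4) ^ (1 + τ) = (1 / 4) ^ (1 + τ) * R ^ (1 + τ) := by
      rw [← Real.mul_rpow (by norm_num) hR.le]; congr 1; ring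
    rw [h5] at hxM
    have h6 := abs_le.1 (Real.norm_eq_abs _ ▸ hmv)
    linarith [h6.1]
  calc ENNReal.ofReal (θ ^ N) * volume (ball z R) = volume (ball x (θ * R)) := by
        rw [Measure.addHaar_ball_mul_of_pos _ x hθ0, Measure.addHaar_ball_center]
        simp
    _ ≤ _ := measure_mono hincl
end
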